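/- arXiv:2506.18460 — 9 statements merged into one kernel-verified Lean document; each statement's English description precedes it below -/
import Mathlib

section
/- Let k₁₂, k₂₁, θ₁, θ₂ ∈ ℝ and let H be the 4×4 real block matrix H = [[−k₁₂I₂ − M(θ₁), k₁₂I₂], [k₂₁I₂, −k₂₁I₂ − M(θ₂)]], where M(θ) = I₂ − z(θ)z(θ)ᵀ and z(θ) = (cos θ, sin θ). Then the characteristic polynomial of H equals λ⁴ + (2k₁₂ + 2k₂₁ + 2)λ³ + (k₁₂² + k₂₁² + 2k₁₂k₂₁ + 3k₁₂ + 3k₂₁ + 1)λ² + (k₁₂² + k₂₁² + 2k₁₂k₂₁ + k₁₂ + k₂₁)λ + k₁₂k₂₁ sin²(θ₁ − θ₂). -/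
/-!
Both sides are compared at an arbitrary real `t`, where the left side is `det (t - H)`. With
`a = t + k₁₂`, `b = t + k₂₁` the diagonal blocks of `t - H` are `a + M(θ₁)` and `b + M(θ₂)`, and the
off-diagonal ones are the scalar matrices `-k₁₂`, `-k₂₁`. Hence `det (t - H) = det (Y - κ)` with
`Y = (a + M(θ₁)) (b + M(θ₂))` and `κ = k₁₂ k₂₁`. As `Y` is `2 × 2`, this is `det Y - κ tr Y + κ²`, which
depends on the angles only through `det (a + M(θ₁)) = a (a + 1)`, `det (b + M(θ₂)) = b (b + 1)`,
`tr M(θᵢ) = 1` and `tr (M(θ₁) M(θ₂)) = cos² (θ₁ - θ₂) = 1 - sin² (θ₁ - θ₂)`. In the proof the determinant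
is expanded directly, and what remains is a combination of the relations `cos² θᵢ + sin² θᵢ = 1`.
-/

open Real Matrix Polynomial

/-- The unit bearing vector `z(θ) = (cos θ, sin θ)`. -/
noncomputable def bearing (θ : ℝ) : Fin 2 → ℝ := ![Real.cos θ, Real.sin θ]

/-- The orthogonal projection matrix `M(θ) = I₂ − z(θ)z(θ)ᵀ`. -/
noncomputable def projMat (θ : ℝ) : Matrix (Fin 2) (Fin 2) ℝ :=
  1 - Matrix.vecMulVec (bearing θ) (bearing θ)

/-- The system matrix `H` of the sensing agents' estimation-error dynamics. -/
noncomputable def sysMat (k₁₂ k₂₁ θ₁ θ₂ : ℝ) :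
    Matrix (Fin 2 ⊕ Fin 2) (Fin 2 ⊕ Fin 2) ℝ :=
  Matrix.fromBlocks (-(k₁₂ • (1 : Matrix (Fin 2) (Fin 2) ℝ)) - projMat θ₁)
    (k₁₂ • (1 : Matrix (Fin 2) (Fin 2) ℝ))
    (k₂₁ • (1 : Matrix (Fin 2) (Fin 2) ℝ))
    (-(k₂₁ • (1 : Matrix (Fin 2) (Fin 2) ℝ)) - projMat θ₂)

theorem charpoly_sysMat (k₁₂ k₂₁ θ₁ θ₂ : ℝ) :
    (sysMat k₁₂ k₂₁ θ₁ θ₂).charpoly =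
      X ^ 4 + C (2 * k₁₂ + 2 * k₂₁ + 2) * X ^ 3
        + C (k₁₂ ^ 2 + k₂₁ ^ 2 + 2 * k₁₂ * k₂₁ + 3 * k₁₂ + 3 * k₂₁ + 1) * X ^ 2
        + C (k₁₂ ^ 2 + k₂₁ ^ 2 + 2 * k₁₂ * k₂₁ + k₁₂ + k₂₁) * X
        + C (k₁₂ * k₂₁ * Real.sin (θ₁ - θ₂) ^ 2) := by
  refine Polynomial.funext fun t => ?_
  rw [Matrix.eval_charpoly, ← Matrix.det_reindex_self finSumFinEquiv]
  -- All entries of the `4 × 4` matrix `t - H`, with the four blocks made explicit.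
  have hmat : Matrix.reindex finSumFinEquiv finSumFinEquiv
      (Matrix.scalar (Fin 2 ⊕ Fin 2) t - sysMat k₁₂ k₂₁ θ₁ θ₂) =
      !![t + k₁₂ + (1 - cos θ₁ * cos θ₁), -(cos θ₁ * sin θ₁), -k₁₂, 0;
         -(sin θ₁ * cos θ₁), t + k₁₂ + (1 - sin θ₁ * sin θ₁), 0, -k₁₂;
         -k₂₁, 0, t + k₂₁ + (1 - cos θ₂ * cos θ₂), -(cos θ₂ * sin θ₂);
         0, -k₂₁, -(sin θ₂ * cos θ₂), t + k₂₁ + (1 - sin θ₂ * sin θ₂)] := by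
    have e0 : finSumFinEquiv.symm (0 : Fin (2 + 2)) = Sum.inl (0 : Fin 2) := rfl
    have e1 : finSumFinEquiv.symm (1 : Fin (2 + 2)) = Sum.inl (1 : Fin 2) := rfl
    have e2 : finSumFinEquiv.symm (2 : Fin (2 + 2)) = Sum.inr (0 : Fin 2) := rfl
    have e3 : finSumFinEquiv.symm (3 : Fin (2 + 2)) = Sum.inr (1 : Fin 2) := rfl
    ext i j
    fin_cases i <;> fin_cases j <;>
      simp [e0, e1, e2, e3, sysMat, projMat, bearing] <;> ring
  rw [hmat]
  have h₁ := Real.sin_sq_add_cos_sq θ₁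
  have h₂ := Real.sin_sq_add_cos_sq θ₂
  simp only [Matrix.det_succ_row_zero, Fin.sum_univ_succ]
  simp [Fin.succAbove, Real.sin_sub]
  -- Write `nᵢ` for `cos² θᵢ + sin² θᵢ`: the determinant is affine in `n₁` and in `n₂` once
  -- `(z(θ₁) ⬝ z(θ₂))²` is replaced by `n₁ n₂ - sin² (θ₁ - θ₂)`. The coefficients below are its slope
  -- in `n₁` and, after setting `n₁ = 1`, its slope in `n₂`.
  linear_combination
    (-(t + k₁₂ + 1) * (t + k₂₁ + 1) * (t + k₂₁ + 1 - (sin θ₂ ^ 2 + cos θ₂ ^ 2))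
      - k₁₂ * k₂₁ * (sin θ₂ ^ 2 + cos θ₂ ^ 2 - (t + k₂₁) - 1)) * h₁
    + (-(t + k₁₂ + 1) * (t + k₁₂) * (t + k₂₁ + 1) + k₁₂ * k₂₁ * (t + k₁₂)) * h₂
end

section
/- Let k₁₂, k₂₁, θ₁, θ₂ ∈ ℝ and let H be the 4×4 real block matrix H = [[−k₁₂I₂ − M(θ₁), k₁₂I₂], [k₂₁I₂, −k₂₁I₂ − M(θ₂)]], where M(θ) = I₂ − z(θ)z(θ)ᵀ and z(θ) = (cos θ, sin θ). Then det(H) = k₁₂ · k₂₁ · sin²(θ₁ − θ₂). -/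
/-!
Write `M(θ) = n(θ) n(θ)ᵀ` with `n(θ) = (-sin θ, cos θ)`. The off-diagonal blocks of `H` are scalar,
so `det H` is the determinant of the 2×2 matrix
`(k₁₂ I + M(θ₁)) (k₂₁ I + M(θ₂)) - k₁₂ k₂₁ I = k₁₂ M(θ₂) + k₂₁ M(θ₁) + M(θ₁) M(θ₂)`.
This factors as `N K Nᵀ`, where `N` has columns `n(θ₁)` and `n(θ₂)` and `K` is upper triangular
with diagonal `k₂₁, k₁₂`; since `det N = ± sin (θ₁ - θ₂)`, the formula follows.
The lemmas `det_fromBlocks_smul_one` and `projMat_eq` give the block reduction and the rank-one form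
of `M(θ)`; the remaining 2×2 determinant is a polynomial identity in the sines and cosines.
-/

open Real Matrix Polynomial

/-- When the off-diagonal blocks `B = b I` and `C = c I` are scalar, the block determinant is that of
`A D - B C`. Unlike the Schur complement formulas, this needs no block to be invertible. -/
theorem det_fromBlocks_smul_one (A D : Matrix (Fin 2) (Fin 2) ℝ) (b c : ℝ) :
    (Matrix.fromBlocks A (b • (1 : Matrix (Fin 2) (Fin 2) ℝ))
      (c • (1 : Matrix (Fin 2) (Fin 2) ℝ)) D).det =
      (A * D - (b * c) • (1 : Matrix (Fin 2) (Fin 2) ℝ)).det := by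
  rw [← Matrix.det_reindex_self finSumFinEquiv]
  have e0 : (finSumFinEquiv (m := 2) (n := 2)).symm 0 = Sum.inl 0 := rfl
  have e1 : (finSumFinEquiv (m := 2) (n := 2)).symm 1 = Sum.inl 1 := rfl
  have e2 : (finSumFinEquiv (m := 2) (n := 2)).symm 2 = Sum.inr 0 := rfl
  have e3 : (finSumFinEquiv (m := 2) (n := 2)).symm 3 = Sum.inr 1 := rfl
  have h : Matrix.reindex finSumFinEquiv finSumFinEquiv
      (Matrix.fromBlocks A (b • (1 : Matrix (Fin 2) (Fin 2) ℝ))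
        (c • (1 : Matrix (Fin 2) (Fin 2) ℝ)) D) =
      !![A 0 0, A 0 1, b, 0; A 1 0, A 1 1, 0, b; c, 0, D 0 0, D 0 1; 0, c, D 1 0, D 1 1] := by
    ext i j
    fin_cases i <;> fin_cases j <;> simp [e0, e1, e2, e3]
  rw [h, Matrix.det_fin_two]
  simp [Matrix.det_succ_row_zero, Fin.sum_univ_succ, Fin.succAbove, Matrix.mul_apply]
  ring

/-- The projection orthogonal to `z(θ)` is `n nᵀ` for the unit normal `n = (-sin θ, cos θ)`. -/
theorem projMat_eq (θ : ℝ) :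
    projMat θ = Matrix.vecMulVec ![-Real.sin θ, Real.cos θ] ![-Real.sin θ, Real.cos θ] := by
  have h := Real.sin_sq_add_cos_sq θ
  ext i j
  fin_cases i <;> fin_cases j <;> simp [projMat, bearing, Matrix.vecMulVec_apply] <;> linarith

theorem det_sysMat (k₁₂ k₂₁ θ₁ θ₂ : ℝ) :
    (sysMat k₁₂ k₂₁ θ₁ θ₂).det = k₁₂ * k₂₁ * Real.sin (θ₁ - θ₂) ^ 2 := by
  rw [sysMat, det_fromBlocks_smul_one, projMat_eq, projMat_eq, Real.sin_sub, Matrix.det_fin_two]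
  simp [Matrix.mul_apply, Fin.sum_univ_two]
  ring
end

section
/- Let k₁₂, k₂₁, θ₁, θ₂ ∈ ℝ with sin(θ₁ − θ₂) = 0, and let H be the 4×4 real block matrix H = [[−k₁₂I₂ − M(θ₁), k₁₂I₂], [k₂₁I₂, −k₂₁I₂ − M(θ₂)]], where M(θ) = I₂ − z(θ)z(θ)ᵀ and z(θ) = (cos θ, sin θ). Then H is singular: there exists a nonzero vector v ∈ ℝ⁴ with H·v = 0; in particular 0 is an eigenvalue of H. -/
/-!
A projection `M(θ)` annihilates every bearing parallel to `z(θ)`. When the agents are collinear with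
the target, `z(θ₁)` therefore lies in the kernels of both `M(θ₁)` and `M(θ₂)`
(`projMat_mulVec_bearing`). The coupling blocks cancel on vectors of the form `(x, x)`, so
`(z(θ₁), z(θ₁))` is a nonzero kernel vector of `H`.
-/

open Real Matrix Polynomial

/-- `M(θ)` kills `z(φ)` when the two bearings are parallel: the components of `M(θ) z(φ)` are
multiples of `sin (φ - θ)`. -/
theorem projMat_mulVec_bearing {θ φ : ℝ} (h : Real.sin (φ - θ) = 0) :
    projMat θ *ᵥ bearing φ = 0 := by
  rw [Real.sin_sub] at h
  have hθ := Real.sin_sq_add_cos_sq θ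
  ext i
  fin_cases i
  · simp [projMat, bearing, sub_mulVec]
    linear_combination (-Real.sin θ) * h - Real.cos φ * hθ
  · simp [projMat, bearing, sub_mulVec]
    linear_combination Real.cos θ * h - Real.sin φ * hθ

theorem bearing_ne_zero (θ : ℝ) : bearing θ ≠ 0 := by
  intro h
  have h0 : Real.cos θ = 0 := congrFun h 0
  have h1 : Real.sin θ = 0 := congrFun h 1
  simpa [h0, h1] using Real.sin_sq_add_cos_sq θ

theorem sysMat_singular_of_collinear (k₁₂ k₂₁ θ₁ θ₂ : ℝ)
    (hcol : Real.sin (θ₁ - θ₂) = 0) :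
    (∃ v : Fin 2 ⊕ Fin 2 → ℝ, v ≠ 0 ∧ (sysMat k₁₂ k₂₁ θ₁ θ₂).mulVec v = 0) ∧
    Module.End.HasEigenvalue (Matrix.toLin' (sysMat k₁₂ k₂₁ θ₁ θ₂)) 0 := by
  have hker : ∃ v : Fin 2 ⊕ Fin 2 → ℝ, v ≠ 0 ∧ (sysMat k₁₂ k₂₁ θ₁ θ₂).mulVec v = 0 := by
    refine ⟨Sum.elim (bearing θ₁) (bearing θ₁), fun h => bearing_ne_zero θ₁ ?_, ?_⟩
    · exact congrArg (fun v => v ∘ Sum.inl) h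
    · have h₁ : projMat θ₁ *ᵥ bearing θ₁ = 0 := projMat_mulVec_bearing (by simp)
      have h₂ : projMat θ₂ *ᵥ bearing θ₁ = 0 := projMat_mulVec_bearing hcol
      simp [sysMat, fromBlocks_mulVec, sub_mulVec, neg_mulVec, smul_mulVec, h₁, h₂]
  refine ⟨hker, ?_⟩
  obtain ⟨v, hv, hHv⟩ := hker
  refine Module.End.hasEigenvalue_of_hasEigenvector (x := v) ⟨?_, hv⟩
  rw [Module.End.mem_eigenspace_iff, Matrix.toLin'_apply, hHv, zero_smul]
end

section
/- Let k₁₂ > 0, k₂₁ > 0 and θ₁, θ₂ ∈ ℝ with sin(θ₁ − θ₂) ≠ 0. Every complex root λ of the quartic polynomial f(λ) = λ⁴ + (2k₁₂ + 2k₂₁ + 2)λ³ + (k₁₂² + k₂₁² + 2k₁₂k₂₁ + 3k₁₂ + 3k₂₁ + 1)λ² + (k₁₂² + k₂₁² + 2k₁₂k₂₁ + k₁₂ + k₂₁)λ + k₁₂k₂₁ sin²(θ₁ − θ₂) has strictly negative real part. -/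
/-!
Write `s = k₁₂ + k₂₁`, `e = k₁₂ k₂₁ sin² (θ₁ - θ₂)` and `w = λ² + (s + 1) λ`. The quartic equals
`w² + s w + e`. Since `0 < e ≤ k₁₂ k₂₁ ≤ s² / 4`, the roots of this quadratic in `w` are real and
negative, so `λ² + (s + 1) λ + a = 0` for some real `a > 0`, and a monic real quadratic with
positive coefficients has its roots in the open left half-plane.
-/


open Real Complex

theorem re_neg_of_quadratic {a b : ℝ} (ha : 0 < a) (hb : 0 < b) {z : ℂ}
    (h : z ^ 2 + b * z + a = 0) : z.re < 0 := by
  have hre := congrArg Complex.re h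
  have him := congrArg Complex.im h
  simp [pow_two] at hre him
  by_contra! hz
  -- The imaginary part of the equation is `(2 Re z + b) Im z = 0`.
  have hy : z.im = 0 := by
    have h0 : (2 * z.re + b) * z.im = 0 := by linarith
    exact (mul_eq_zero.mp h0).resolve_left (by positivity)
  rw [hy] at hre
  nlinarith [mul_nonneg hb.le hz, mul_nonneg hz hz]

theorem quartic_roots_neg_re (k₁₂ k₂₁ θ₁ θ₂ : ℝ)
    (hk₁₂ : 0 < k₁₂) (hk₂₁ : 0 < k₂₁) (hθ : Real.sin (θ₁ - θ₂) ≠ 0) :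
    ∀ lam : ℂ,
      lam ^ 4 + (2 * k₁₂ + 2 * k₂₁ + 2 : ℝ) * lam ^ 3
        + (k₁₂ ^ 2 + k₂₁ ^ 2 + 2 * k₁₂ * k₂₁ + 3 * k₁₂ + 3 * k₂₁ + 1 : ℝ) * lam ^ 2
        + (k₁₂ ^ 2 + k₂₁ ^ 2 + 2 * k₁₂ * k₂₁ + k₁₂ + k₂₁ : ℝ) * lam
        + (k₁₂ * k₂₁ * Real.sin (θ₁ - θ₂) ^ 2 : ℝ) = 0 →
      lam.re < 0 := by
  intro lam h
  have hkk : 0 < k₁₂ * k₂₁ := mul_pos hk₁₂ hk₂₁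
  have he : 0 < k₁₂ * k₂₁ * Real.sin (θ₁ - θ₂) ^ 2 := by positivity
  have he' : k₁₂ * k₂₁ * Real.sin (θ₁ - θ₂) ^ 2 ≤ k₁₂ * k₂₁ :=
    mul_le_of_le_one_right hkk.le (Real.sin_sq_le_one _)
  generalize k₁₂ * k₂₁ * Real.sin (θ₁ - θ₂) ^ 2 = e at h he he'
  have hdisc : 0 ≤ (k₁₂ + k₂₁) ^ 2 - 4 * e := by nlinarith [sq_nonneg (k₁₂ - k₂₁)]
  obtain ⟨D, hD0, hD⟩ : ∃ D : ℝ, 0 ≤ D ∧ D ^ 2 = (k₁₂ + k₂₁) ^ 2 - 4 * e :=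
    ⟨√((k₁₂ + k₂₁) ^ 2 - 4 * e), Real.sqrt_nonneg _, Real.sq_sqrt hdisc⟩
  have hDs : D < k₁₂ + k₂₁ := by nlinarith
  have hDc : (D : ℂ) ^ 2 = ((k₁₂ : ℂ) + k₂₁) ^ 2 - 4 * e := by exact_mod_cast hD
  have hfac :
      (lam ^ 2 + (k₁₂ + k₂₁ + 1 : ℝ) * lam + ((k₁₂ + k₂₁ - D) / 2 : ℝ)) *
        (lam ^ 2 + (k₁₂ + k₂₁ + 1 : ℝ) * lam + ((k₁₂ + k₂₁ + D) / 2 : ℝ)) = 0 := by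
    push_cast at h ⊢
    linear_combination h - hDc / 4
  rcases mul_eq_zero.mp hfac with h1 | h1
  · exact re_neg_of_quadratic (by linarith) (by positivity) h1
  · exact re_neg_of_quadratic (by positivity) (by positivity) h1
end

section
/- Let k₁₂ > 0, k₂₁ > 0 and θ₁, θ₂ ∈ ℝ with sin(θ₁ − θ₂) ≠ 0, and let H be the 4×4 real block matrix H = [[−k₁₂I₂ − M(θ₁), k₁₂I₂], [k₂₁I₂, −k₂₁I₂ − M(θ₂)]], where M(θ) = I₂ − z(θ)z(θ)ᵀ and z(θ) = (cos θ, sin θ). Then every complex eigenvalue of H has strictly negative real part (H is Hurwitz). -/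
/-!
The two gains symmetrise `H`: with `D = diag(k₂₁ I₂, k₁₂ I₂)` and `n(θ) = (-sin θ, cos θ)`, so that
`M(θ) = n(θ) n(θ)ᵀ`, every real vector `v = (x, y)` satisfies
`vᵀ D H v = -(k₁₂ k₂₁ |x - y|² + k₂₁ (n(θ₁) ⬝ x)² + k₁₂ (n(θ₂) ⬝ y)²)` (`weighted_form_eq`).
This vanishes only if `x = y` is orthogonal to both `n(θ₁)` and `n(θ₂)`, which are linearly
independent because `sin (θ₁ - θ₂) ≠ 0`; hence the form is negative definite (`weighted_form_neg`).
If `H u = lam u` with `u = p + i q`, then adding the identities for `p` and `q` gives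
`lam.re * (pᵀ D p + qᵀ D q) = pᵀ D H p + qᵀ D H q < 0`.
-/

open Real Matrix Polynomial

/-- The diagonal of the matrix `D = diag(k₂₁ I₂, k₁₂ I₂)` that symmetrises `sysMat`. -/
def gainWeight (k₁₂ k₂₁ : ℝ) : Fin 2 ⊕ Fin 2 → ℝ :=
  Sum.elim (fun _ => k₂₁) (fun _ => k₁₂)

lemma gainWeight_pos {k₁₂ k₂₁ : ℝ} (hk₁₂ : 0 < k₁₂) (hk₂₁ : 0 < k₂₁) (i : Fin 2 ⊕ Fin 2) :
    0 < gainWeight k₁₂ k₂₁ i := by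
  cases i <;> simpa [gainWeight]

lemma projMat_eq_s6 (θ : ℝ) :
    projMat θ = !![sin θ ^ 2, -(sin θ * cos θ); -(sin θ * cos θ), cos θ ^ 2] := by
  have h := Real.sin_sq_add_cos_sq θ
  ext i j
  fin_cases i <;> fin_cases j <;> simp [projMat, bearing] <;> linarith

lemma weighted_form_eq (k₁₂ k₂₁ θ₁ θ₂ : ℝ) (v : Fin 2 ⊕ Fin 2 → ℝ) :
    ∑ i, gainWeight k₁₂ k₂₁ i * (v i * (sysMat k₁₂ k₂₁ θ₁ θ₂ *ᵥ v) i) =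
      -(k₁₂ * k₂₁ * ((v (.inl 0) - v (.inr 0)) ^ 2 + (v (.inl 1) - v (.inr 1)) ^ 2)
        + k₂₁ * (-sin θ₁ * v (.inl 0) + cos θ₁ * v (.inl 1)) ^ 2
        + k₁₂ * (-sin θ₂ * v (.inr 0) + cos θ₂ * v (.inr 1)) ^ 2) := by
  simp [sysMat, projMat_eq_s6, gainWeight, Matrix.mulVec, dotProduct, Fin.sum_univ_two,
    Matrix.one_apply]
  ring

lemma weighted_form_neg {k₁₂ k₂₁ θ₁ θ₂ : ℝ}
    (hk₁₂ : 0 < k₁₂) (hk₂₁ : 0 < k₂₁) (hθ : sin (θ₁ - θ₂) ≠ 0)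
    {v : Fin 2 ⊕ Fin 2 → ℝ} (hv : v ≠ 0) :
    ∑ i, gainWeight k₁₂ k₂₁ i * (v i * (sysMat k₁₂ k₂₁ θ₁ θ₂ *ᵥ v) i) < 0 := by
  rw [weighted_form_eq]
  by_contra! hcon
  apply hv
  have hk := mul_pos hk₁₂ hk₂₁
  have h1 := mul_nonneg hk.le (sq_nonneg (v (.inl 0) - v (.inr 0)))
  have h2 := mul_nonneg hk.le (sq_nonneg (v (.inl 1) - v (.inr 1)))
  have h3 := mul_nonneg hk₂₁.le (sq_nonneg (-sin θ₁ * v (.inl 0) + cos θ₁ * v (.inl 1)))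
  have h4 := mul_nonneg hk₁₂.le (sq_nonneg (-sin θ₂ * v (.inr 0) + cos θ₂ * v (.inr 1)))
  have key : ∀ {k a : ℝ}, 0 < k → k * a ^ 2 ≤ 0 → a = 0 := fun {k a} hk h =>
    pow_eq_zero_iff two_ne_zero |>.mp
      (le_antisymm (nonpos_of_mul_nonpos_right h hk) (sq_nonneg a))
  have e1 := key hk (a := v (.inl 0) - v (.inr 0)) (by linarith)
  have e2 := key hk (a := v (.inl 1) - v (.inr 1)) (by linarith)
  have e3 := key hk₂₁ (a := -sin θ₁ * v (.inl 0) + cos θ₁ * v (.inl 1)) (by linarith)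
  have e4 := key hk₁₂ (a := -sin θ₂ * v (.inr 0) + cos θ₂ * v (.inr 1)) (by linarith)
  have f0 : v (.inl 0) = v (.inr 0) := by linarith
  have f1 : v (.inl 1) = v (.inr 1) := by linarith
  rw [f0, f1] at e3
  -- Cramer's rule: the system with rows `n(θ₁)`, `n(θ₂)` has determinant `-sin (θ₁ - θ₂)`.
  have g0 : v (.inr 0) = 0 := by
    refine (mul_eq_zero.mp ?_).resolve_left hθ
    rw [sin_sub]
    linear_combination (-cos θ₂) * e3 + cos θ₁ * e4
  have g1 : v (.inr 1) = 0 := by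
    refine (mul_eq_zero.mp ?_).resolve_left hθ
    rw [sin_sub]
    linear_combination (-sin θ₂) * e3 + sin θ₁ * e4
  ext i
  rcases i with i | i <;> fin_cases i <;> simp [f0, f1, g0, g1]

theorem sysMat_hurwitz (k₁₂ k₂₁ θ₁ θ₂ : ℝ)
    (hk₁₂ : 0 < k₁₂) (hk₂₁ : 0 < k₂₁) (hθ : Real.sin (θ₁ - θ₂) ≠ 0) :
    ∀ lam ∈ spectrum ℂ ((sysMat k₁₂ k₂₁ θ₁ θ₂).map (Complex.ofReal ·)),
      lam.re < 0 := by
  intro lam hlam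
  rw [← Matrix.spectrum_toLin', ← Module.End.hasEigenvalue_iff_mem_spectrum] at hlam
  obtain ⟨u, hu⟩ := hlam.exists_hasEigenvector
  have hne := hu.2
  have heq := hu.apply_eq_smul
  rw [Matrix.toLin'_apply] at heq
  set p : Fin 2 ⊕ Fin 2 → ℝ := fun i => (u i).re with hp
  set q : Fin 2 ⊕ Fin 2 → ℝ := fun i => (u i).im with hq
  have hre : ∀ i, (sysMat k₁₂ k₂₁ θ₁ θ₂ *ᵥ p) i = lam.re * p i - lam.im * q i := fun i => by
    have := congrArg Complex.re (congrFun heq i)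
    simpa [Matrix.mulVec, dotProduct, hp, hq] using this
  have him : ∀ i, (sysMat k₁₂ k₂₁ θ₁ θ₂ *ᵥ q) i = lam.re * q i + lam.im * p i := fun i => by
    have := congrArg Complex.im (congrFun heq i)
    simpa [Matrix.mulVec, dotProduct, hp, hq] using this
  have hsum : lam.re * ∑ i, gainWeight k₁₂ k₂₁ i * (p i ^ 2 + q i ^ 2) =
      ∑ i, gainWeight k₁₂ k₂₁ i * (p i * (sysMat k₁₂ k₂₁ θ₁ θ₂ *ᵥ p) i) +
      ∑ i, gainWeight k₁₂ k₂₁ i * (q i * (sysMat k₁₂ k₂₁ θ₁ θ₂ *ᵥ q) i) := by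
    rw [Finset.mul_sum, ← Finset.sum_add_distrib]
    refine Finset.sum_congr rfl fun i _ => ?_
    rw [hre, him]
    ring
  have hnonneg : 0 ≤ ∑ i, gainWeight k₁₂ k₂₁ i * (p i ^ 2 + q i ^ 2) :=
    Finset.sum_nonneg fun i _ => mul_nonneg (gainWeight_pos hk₁₂ hk₂₁ i).le (by positivity)
  have hle : ∀ v : Fin 2 ⊕ Fin 2 → ℝ,
      ∑ i, gainWeight k₁₂ k₂₁ i * (v i * (sysMat k₁₂ k₂₁ θ₁ θ₂ *ᵥ v) i) ≤ 0 := fun v => by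
    rcases eq_or_ne v 0 with rfl | hv
    · simp
    · exact (weighted_form_neg hk₁₂ hk₂₁ hθ hv).le
  have hpq : p ≠ 0 ∨ q ≠ 0 := by
    by_contra! h
    exact hne (funext fun i => Complex.ext (congrFun h.1 i) (congrFun h.2 i))
  have hneg : lam.re * ∑ i, gainWeight k₁₂ k₂₁ i * (p i ^ 2 + q i ^ 2) < 0 := by
    rw [hsum]
    rcases hpq with h | h
    · exact add_neg_of_neg_of_nonpos (weighted_form_neg hk₁₂ hk₂₁ hθ h) (hle q)
    · exact add_neg_of_nonpos_of_neg (hle p) (weighted_form_neg hk₁₂ hk₂₁ hθ h)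
  exact neg_of_mul_neg_left hneg hnonneg
end

section
/- Let k₁₂, k₂₁, θ₁, θ₂ ∈ ℝ with k₁₂ > 0, k₂₁ > 0, and let H be the 4×4 real block matrix H = [[−k₁₂I₂ − M(θ₁), k₁₂I₂], [k₂₁I₂, −k₂₁I₂ − M(θ₂)]], where M(θ) = I₂ − z(θ)z(θ)ᵀ and z(θ) = (cos θ, sin θ). Then every complex eigenvalue of H has strictly negative real part if and only if sin(θ₁ − θ₂) ≠ 0. -/
/-!
Write `n(θ) = (sin θ, -cos θ)`, so that `M(θ) = n(θ) n(θ)ᵀ`. If `(x, y)` is an eigenvector of `H`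
for `lam`, pairing the two block rows with `k₂₁ x` and `k₁₂ y` symmetrises the coupling and gives

`lam (k₂₁ |x|² + k₁₂ |y|²) = -(k₁₂ k₂₁ |x - y|² + k₂₁ |n(θ₁)·x|² + k₁₂ |n(θ₂)·y|²)`.

Hence `lam` is real and nonpositive, and it vanishes only if `x = y` is orthogonal to both
`n(θ₁)` and `n(θ₂)`, whose determinant is `± sin (θ₁ - θ₂)`. Conversely, if the sine vanishes then
`(z(θ₁), z(θ₁))` is in the kernel of `H`.
-/

open Real Matrix Polynomial

/-- The eigenvalue equation of `sysMat` in coordinates, with `M(θ)` written as `n nᵀ` for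
`n = (sin θ, -cos θ)`. -/
lemma mem_spectrum_sysMat_iff (k₁₂ k₂₁ θ₁ θ₂ : ℝ) (lam : ℂ) :
    lam ∈ spectrum ℂ ((sysMat k₁₂ k₂₁ θ₁ θ₂).map (Complex.ofReal ·)) ↔
      ∃ x₀ x₁ y₀ y₁ : ℂ, ¬(x₀ = 0 ∧ x₁ = 0 ∧ y₀ = 0 ∧ y₁ = 0) ∧
        lam * x₀ = k₁₂ * (y₀ - x₀) - Real.sin θ₁ * (Real.sin θ₁ * x₀ - Real.cos θ₁ * x₁) ∧
        lam * x₁ = k₁₂ * (y₁ - x₁) + Real.cos θ₁ * (Real.sin θ₁ * x₀ - Real.cos θ₁ * x₁) ∧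
        lam * y₀ = k₂₁ * (x₀ - y₀) - Real.sin θ₂ * (Real.sin θ₂ * y₀ - Real.cos θ₂ * y₁) ∧
        lam * y₁ = k₂₁ * (x₁ - y₁) + Real.cos θ₂ * (Real.sin θ₂ * y₀ - Real.cos θ₂ * y₁) := by
  have h₁ : (Real.sin θ₁ : ℂ) ^ 2 + (Real.cos θ₁ : ℂ) ^ 2 = 1 := by
    exact_mod_cast Real.sin_sq_add_cos_sq θ₁
  have h₂ : (Real.sin θ₂ : ℂ) ^ 2 + (Real.cos θ₂ : ℂ) ^ 2 = 1 := by
    exact_mod_cast Real.sin_sq_add_cos_sq θ₂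
  have key (v : Fin 2 ⊕ Fin 2 → ℂ) :
      (algebraMap ℂ (Matrix (Fin 2 ⊕ Fin 2) (Fin 2 ⊕ Fin 2) ℂ) lam -
        (sysMat k₁₂ k₂₁ θ₁ θ₂).map (Complex.ofReal ·)) *ᵥ v = 0 ↔
      lam * v (.inl 0) = k₁₂ * (v (.inr 0) - v (.inl 0)) -
        Real.sin θ₁ * (Real.sin θ₁ * v (.inl 0) - Real.cos θ₁ * v (.inl 1)) ∧
      lam * v (.inl 1) = k₁₂ * (v (.inr 1) - v (.inl 1)) +
        Real.cos θ₁ * (Real.sin θ₁ * v (.inl 0) - Real.cos θ₁ * v (.inl 1)) ∧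
      lam * v (.inr 0) = k₂₁ * (v (.inl 0) - v (.inr 0)) -
        Real.sin θ₂ * (Real.sin θ₂ * v (.inr 0) - Real.cos θ₂ * v (.inr 1)) ∧
      lam * v (.inr 1) = k₂₁ * (v (.inl 1) - v (.inr 1)) +
        Real.cos θ₂ * (Real.sin θ₂ * v (.inr 0) - Real.cos θ₂ * v (.inr 1)) := by
    rw [Matrix.sub_mulVec, sub_eq_zero, Algebra.algebraMap_eq_smul_one, Matrix.smul_mulVec,
      Matrix.one_mulVec, funext_iff, Sum.forall, Fin.forall_fin_two, Fin.forall_fin_two, and_assoc]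
    simp only [Pi.smul_apply, smul_eq_mul, Matrix.mulVec, dotProduct, Fintype.sum_sum_type,
      Fin.sum_univ_two, Matrix.map_apply, sysMat, projMat, bearing, Matrix.fromBlocks_apply₁₁,
      Matrix.fromBlocks_apply₁₂, Matrix.fromBlocks_apply₂₁, Matrix.fromBlocks_apply₂₂,
      Matrix.sub_apply, Matrix.neg_apply, Matrix.smul_apply, Matrix.one_apply,
      Matrix.vecMulVec_apply, Matrix.cons_val_zero, Matrix.cons_val_one]
    simp only [Fin.isValue, if_true, if_false, zero_ne_one, one_ne_zero, mul_one, mul_zero,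
      Complex.ofReal_sub, Complex.ofReal_neg, Complex.ofReal_mul, Complex.ofReal_one,
      Complex.ofReal_zero]
    refine and_congr (Eq.congr_right ?_) (and_congr (Eq.congr_right ?_)
      (and_congr (Eq.congr_right ?_) (Eq.congr_right ?_)))
    · linear_combination v (.inl 0) * h₁
    · linear_combination v (.inl 1) * h₁
    · linear_combination v (.inr 0) * h₂
    · linear_combination v (.inr 1) * h₂
  rw [spectrum.mem_iff, Matrix.isUnit_iff_isUnit_det, isUnit_iff_ne_zero, not_not,
    ← Matrix.exists_mulVec_eq_zero_iff]
  constructor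
  · rintro ⟨v, hv, h⟩
    refine ⟨v (.inl 0), v (.inl 1), v (.inr 0), v (.inr 1), ?_, (key v).1 h⟩
    rintro ⟨a, b, c, d⟩
    apply hv
    ext i
    rcases i with i | i <;> fin_cases i <;> assumption
  · rintro ⟨x₀, x₁, y₀, y₁, hne, h⟩
    refine ⟨Sum.elim ![x₀, x₁] ![y₀, y₁], ?_, (key _).2 h⟩
    intro h0
    exact hne ⟨congrFun h0 (.inl 0), congrFun h0 (.inl 1), congrFun h0 (.inr 0),
      congrFun h0 (.inr 1)⟩

theorem sysMat_hurwitz_iff (k₁₂ k₂₁ θ₁ θ₂ : ℝ)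
    (hk₁₂ : 0 < k₁₂) (hk₂₁ : 0 < k₂₁) :
    (∀ lam ∈ spectrum ℂ ((sysMat k₁₂ k₂₁ θ₁ θ₂).map (Complex.ofReal ·)),
      lam.re < 0) ↔ Real.sin (θ₁ - θ₂) ≠ 0 := by
  constructor
  · intro h hs
    rw [Real.sin_sub] at hs
    have hs' : (Real.sin θ₁ : ℂ) * Real.cos θ₂ - Real.cos θ₁ * Real.sin θ₂ = 0 := by
      exact_mod_cast hs
    refine lt_irrefl (0 : ℝ) (h 0 ((mem_spectrum_sysMat_iff _ _ _ _ _).2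
      ⟨Real.cos θ₁, Real.sin θ₁, Real.cos θ₁, Real.sin θ₁, ?_, ?_, ?_, ?_, ?_⟩))
    · rintro ⟨a, b, -, -⟩
      have := Real.sin_sq_add_cos_sq θ₁
      rw [Complex.ofReal_eq_zero.1 a, Complex.ofReal_eq_zero.1 b] at this
      norm_num at this
    · ring
    · ring
    · linear_combination -Real.sin θ₂ * hs'
    · linear_combination Real.cos θ₂ * hs'
  · intro hs lam hlam
    obtain ⟨x₀, x₁, y₀, y₁, hne, e₁, e₂, e₃, e₄⟩ := (mem_spectrum_sysMat_iff _ _ _ _ _).1 hlam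
    set n₁ : ℂ := Real.sin θ₁ * x₀ - Real.cos θ₁ * x₁ with hn₁
    set n₂ : ℂ := Real.sin θ₂ * y₀ - Real.cos θ₂ * y₁ with hn₂
    have c₁ : (starRingEnd ℂ) n₁ = Real.sin θ₁ * (starRingEnd ℂ) x₀ -
        Real.cos θ₁ * (starRingEnd ℂ) x₁ := by
      simp only [hn₁, map_sub, map_mul, Complex.conj_ofReal]
    have c₂ : (starRingEnd ℂ) n₂ = Real.sin θ₂ * (starRingEnd ℂ) y₀ -
        Real.cos θ₂ * (starRingEnd ℂ) y₁ := by
      simp only [hn₂, map_sub, map_mul, Complex.conj_ofReal]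
    set W : ℝ := k₂₁ * (Complex.normSq x₀ + Complex.normSq x₁) +
      k₁₂ * (Complex.normSq y₀ + Complex.normSq y₁) with hW
    set D : ℝ := k₁₂ * k₂₁ * (Complex.normSq (x₀ - y₀) + Complex.normSq (x₁ - y₁)) +
      k₂₁ * Complex.normSq n₁ + k₁₂ * Complex.normSq n₂ with hD
    have key : lam * (W : ℂ) = ((-D : ℝ) : ℂ) := by
      rw [hW, hD]
      push_cast
      simp only [← Complex.mul_conj, map_sub, c₁, c₂]
      linear_combination k₂₁ * (starRingEnd ℂ) x₀ * e₁ + k₂₁ * (starRingEnd ℂ) x₁ * e₂ +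
        k₁₂ * (starRingEnd ℂ) y₀ * e₃ + k₁₂ * (starRingEnd ℂ) y₁ * e₄
    have hre : lam.re * W = -D := by
      have := congrArg Complex.re key
      rwa [Complex.re_mul_ofReal, Complex.ofReal_re] at this
    have a₀ := Complex.normSq_nonneg x₀
    have a₁ := Complex.normSq_nonneg x₁
    have b₀ := Complex.normSq_nonneg y₀
    have b₁ := Complex.normSq_nonneg y₁
    have d₀ := Complex.normSq_nonneg (x₀ - y₀)
    have d₁ := Complex.normSq_nonneg (x₁ - y₁)
    have m₁ := Complex.normSq_nonneg n₁
    have m₂ := Complex.normSq_nonneg n₂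
    have hW0 : 0 ≤ W := by positivity
    have hDpos : 0 < D := by
      have hD0 : 0 ≤ D := by positivity
      refine lt_of_le_of_ne hD0 fun h0 => hne ?_
      have hk := mul_pos hk₁₂ hk₂₁
      have p₀ := mul_nonneg hk.le d₀
      have p₁ := mul_nonneg hk.le d₁
      have p₂ := mul_nonneg hk₂₁.le m₁
      have p₃ := mul_nonneg hk₁₂.le m₂
      have hxy₀ : x₀ - y₀ = 0 := Complex.normSq_eq_zero.1
        ((mul_eq_zero.1 (by linarith : k₁₂ * k₂₁ * _ = 0)).resolve_left hk.ne')
      have hxy₁ : x₁ - y₁ = 0 := Complex.normSq_eq_zero.1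
        ((mul_eq_zero.1 (by linarith : k₁₂ * k₂₁ * _ = 0)).resolve_left hk.ne')
      have z₁ : n₁ = 0 := Complex.normSq_eq_zero.1
        ((mul_eq_zero.1 (by linarith : k₂₁ * _ = 0)).resolve_left hk₂₁.ne')
      have z₂ : n₂ = 0 := Complex.normSq_eq_zero.1
        ((mul_eq_zero.1 (by linarith : k₁₂ * _ = 0)).resolve_left hk₁₂.ne')
      have hs' : (Real.sin θ₁ : ℂ) * Real.cos θ₂ - Real.cos θ₁ * Real.sin θ₂ ≠ 0 := by
        rw [Real.sin_sub] at hs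
        exact_mod_cast hs
      rw [hn₁] at z₁
      rw [hn₂] at z₂
      -- Cramer's rule for the system `n(θ₁)·y = n(θ₂)·y = 0`.
      have hy₀ : y₀ = 0 := (mul_eq_zero.1 (by
        linear_combination Real.cos θ₂ * z₁ - Real.cos θ₁ * z₂ -
          Real.cos θ₂ * (Real.sin θ₁ * hxy₀ - Real.cos θ₁ * hxy₁) :
          ((Real.sin θ₁ : ℂ) * Real.cos θ₂ - Real.cos θ₁ * Real.sin θ₂) * y₀ = 0)).resolve_left hs'
      have hy₁ : y₁ = 0 := (mul_eq_zero.1 (by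
        linear_combination Real.sin θ₂ * z₁ - Real.sin θ₁ * z₂ -
          Real.sin θ₂ * (Real.sin θ₁ * hxy₀ - Real.cos θ₁ * hxy₁) :
          ((Real.sin θ₁ : ℂ) * Real.cos θ₂ - Real.cos θ₁ * Real.sin θ₂) * y₁ = 0)).resolve_left hs'
      exact ⟨by linear_combination hxy₀ + hy₀, by linear_combination hxy₁ + hy₁, hy₀, hy₁⟩
    by_contra hcon
    have := mul_nonneg (not_lt.1 hcon) hW0
    linarith
end

section
/- (Theorem 1, cascade form) Let k₁₂ > 0, k₂₁ > 0 and θ₁, θ₂ ∈ ℝ with sin(θ₁ − θ₂) ≠ 0, so that the sensing-agent error system matrix H = [[−k₁₂I₂ − M(θ₁), k₁₂I₂], [k₂₁I₂, −k₂₁I₂ − M(θ₂)]] governs q̃₁, q̃₂ via q̃̇₁ = −k₁₂(q̃₁ − q̃₂) − M(θ₁)q̃₁ and q̃̇₂ = −k₂₁(q̃₂ − q̃₁) − M(θ₂)q̃₂. Let m ≥ 1, let A be a real m×m matrix all of whose complex eigenvalues have strictly positive real part, let B_f, B_e ∈ ℝ^m, and suppose q̃* : ℝ → ℝ^{2m}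 is differentiable and satisfies q̃*′(t) = −(A ⊗ I₂)·q̃*(t) + (B_f ⊗ I₂)·q̃₁(t) − (B_e ⊗ I₂)·(q̃₁(t) − q̃₂(t)) for all t ≥ 0. Then there exist C > 0 and α > 0 such that ‖q̃₁(t)‖ + ‖q̃₂(t)‖ + ‖q̃*(t)‖ ≤ C·e^{−αt}·(‖q̃₁(0)‖ + ‖q̃₂(0)‖ + ‖q̃*(0)‖) for all t ≥ 0; in particular every agent's target-position estimation error converges exponentially to 0. -/
/-!
The system is a cascade: the sensing agents evolve autonomously and drive the consensus layer.

For the sensing agents, `V = k₂₁ |q₁|² + k₁₂ |q₂|²` satisfies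
`V' = -2 k₁₂ k₂₁ |q₁ - q₂|² - 2 k₂₁ |M(θ₁) q₁|² - 2 k₁₂ |M(θ₂) q₂|²`. Since `M(θ)` measures the
component orthogonal to the bearing `z(θ)`, and the two bearings are independent when
`sin (θ₁ - θ₂) ≠ 0`, the dissipation dominates a multiple of `V` (`dissipation_coercive`), so `V`
decays exponentially (`sensing_decay`).

For the consensus layer, `A ⊗ I₂` splits into two copies of `x' = -A x + f` with `f` decaying
exponentially. Over `ℂ` the characteristic polynomial of `A` is a product of factors `X - μ` with
`Re μ > 0`. Setting `y = (A - μ) x` gives `x' = -μ x + (f - y)`, while `y` solves the same kind of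
system with one factor fewer; induction on the factors reduces the estimate to the scalar mode
`x' = -μ x + g` (`mode_decay`, `decay_of_annihilating_roots`, `hurwitz_decay`). This avoids any
normal form or matrix exponential.
-/

open Real Matrix Kronecker

/-- Scalar comparison: a mode `x' = -μ x + g` forced by an exponentially decaying input decays at
the rate of the input as soon as that rate is smaller than `Re μ`. -/
theorem mode_decay {E : Type*} [NormedAddCommGroup E] [NormedSpace ℂ E]
    (μ : ℂ) (α K : ℝ) (hα : α < μ.re) (x g : ℝ → E)
    (hx : ∀ t : ℝ, 0 ≤ t → HasDerivAt x (-(μ • x t) + g t) t)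
    (hg : ∀ t : ℝ, 0 ≤ t → ‖g t‖ ≤ K * Real.exp (-α * t)) (t : ℝ) (ht : 0 ≤ t) :
    ‖x t‖ ≤ (‖x 0‖ + K / (μ.re - α)) * Real.exp (-α * t) := by
  set r := μ.re - α with hr
  have hr0 : 0 < r := by rw [hr]; linarith
  have hK : 0 ≤ K := by
    have := (norm_nonneg _).trans (hg 0 le_rfl)
    simpa using this
  have hexp (s : ℝ) : HasDerivAt (fun s : ℝ => Complex.exp (μ * s)) (Complex.exp (μ * s) * μ) s := by
    have h1 : HasDerivAt (fun s : ℝ => μ * (s : ℂ)) (μ * 1) s :=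
      (Complex.ofRealCLM.hasDerivAt (x := s)).const_mul μ
    simpa using h1.cexp
  have hnorm (s : ℝ) : ‖Complex.exp (μ * s)‖ = Real.exp (μ.re * s) := by
    rw [Complex.norm_exp]; simp
  have hz (s : ℝ) (hs : 0 ≤ s) : HasDerivAt (fun s : ℝ => Complex.exp (μ * s) • x s)
      (Complex.exp (μ * s) • g s) s := by
    refine ((hexp s).smul (hx s hs)).congr_deriv ?_
    rw [smul_add, smul_neg, smul_smul]
    abel
  have hB (s : ℝ) : HasDerivAt (fun s : ℝ => ‖x 0‖ + K / r * (Real.exp (r * s) - 1))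
      (K * Real.exp (r * s)) s := by
    have h1 : HasDerivAt (fun s : ℝ => r * s) (r * 1) s := (hasDerivAt_id s).const_mul r
    refine (((h1.exp.sub_const 1).const_mul (K / r)).const_add ‖x 0‖).congr_deriv ?_
    field_simp
  have key := image_norm_le_of_norm_deriv_right_le_deriv_boundary'
    (f := fun s : ℝ => Complex.exp (μ * s) • x s) (a := 0) (b := t)
    (f' := fun s : ℝ => Complex.exp (μ * s) • g s)
    (fun s hs => (hz s hs.1).continuousAt.continuousWithinAt)
    (fun s hs => (hz s hs.1).hasDerivWithinAt)
    (B := fun s : ℝ => ‖x 0‖ + K / r * (Real.exp (r * s) - 1))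
    (B' := fun s : ℝ => K * Real.exp (r * s))
    (by simp)
    (fun s _ => (hB s).continuousAt.continuousWithinAt)
    (fun s _ => (hB s).hasDerivWithinAt)
    (by
      intro s hs
      rw [norm_smul, hnorm]
      calc Real.exp (μ.re * s) * ‖g s‖ ≤ Real.exp (μ.re * s) * (K * Real.exp (-α * s)) := by
            gcongr; exact hg s hs.1
        _ = K * (Real.exp (μ.re * s) * Real.exp (-α * s)) := by ring
        _ = K * Real.exp (r * s) := by rw [← Real.exp_add, hr]; ring_nf)
    (Set.right_mem_Icc.2 ht)
  simp only [norm_smul, hnorm] at key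
  have hKr : 0 ≤ K / r := by positivity
  have h1 : 1 ≤ Real.exp (r * t) := Real.one_le_exp (by positivity)
  have h2 : Real.exp (μ.re * t) = Real.exp (r * t) * Real.exp (α * t) := by
    rw [← Real.exp_add, hr]; ring_nf
  have h3 : Real.exp (r * t) * (Real.exp (α * t) * ‖x t‖)
      ≤ Real.exp (r * t) * (‖x 0‖ + K / r) := by
    rw [← mul_assoc, ← h2]
    nlinarith [norm_nonneg (x 0), mul_nonneg (norm_nonneg (x 0)) (sub_nonneg.2 h1)]
  have h4 := le_of_mul_le_mul_left h3 (Real.exp_pos _)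
  have h5 : Real.exp (-α * t) * Real.exp (α * t) = 1 := by
    rw [← Real.exp_add]; simp
  calc ‖x t‖ = Real.exp (-α * t) * (Real.exp (α * t) * ‖x t‖) := by
        rw [← mul_assoc, h5, one_mul]
    _ ≤ Real.exp (-α * t) * (‖x 0‖ + K / r) := by gcongr
    _ = _ := mul_comm _ _

/-- Input-to-state decay for `x' = -T x + f`, where `T` is annihilated on the trajectory by a
polynomial with root multiset `s`. Peeling off one root `μ`, the vector `y = (T - μ) x` solves a
system of the same kind with one root fewer, and `x` is the mode `x' = -μ x + (f - y)`. -/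
theorem decay_of_annihilating_roots {E : Type*} [NormedAddCommGroup E] [NormedSpace ℂ E]
    (T : E →L[ℂ] E) (α : ℝ) (s : Multiset ℂ) (hs : ∀ μ ∈ s, α < μ.re) :
    ∃ C : ℝ, 0 ≤ C ∧ ∀ (x f : ℝ → E) (K : ℝ),
      (∀ t : ℝ, 0 ≤ t → HasDerivAt x (-(T (x t)) + f t) t) →
      (∀ t : ℝ, 0 ≤ t → ‖f t‖ ≤ K * Real.exp (-α * t)) →
      (∀ t : ℝ, 0 ≤ t → Polynomial.aeval T
        (s.map fun μ => Polynomial.X - Polynomial.C μ).prod (x t) = 0) →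
      ∀ t : ℝ, 0 ≤ t → ‖x t‖ ≤ C * (‖x 0‖ + K) * Real.exp (-α * t) := by
  induction s using Multiset.induction_on with
  | empty =>
    refine ⟨0, le_rfl, fun x f K _ _ h t ht => ?_⟩
    have := h t ht
    simp only [Multiset.map_zero, Multiset.prod_zero, map_one,
      one_apply_eq_self] at this
    simp [this]
  | cons μ s ih =>
    obtain ⟨C, hC, ih⟩ := ih fun ν hν => hs ν (Multiset.mem_cons_of_mem hν)
    have hμ := hs μ (Multiset.mem_cons_self μ s)
    set S : E →L[ℂ] E := T - algebraMap ℂ (E →L[ℂ] E) μ with hS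
    have hSapp (v : E) : S v = T v - μ • v := by
      simp [hS, Algebra.algebraMap_eq_smul_one]
    have hr : 0 < μ.re - α := by linarith
    refine ⟨1 + (1 + C * ‖S‖) / (μ.re - α), by positivity, fun x f K hx hf h t ht => ?_⟩
    have hK : 0 ≤ K := by
      have := (norm_nonneg _).trans (hf 0 le_rfl)
      simpa using this
    have hy := ih (fun t => S (x t)) (fun t => S (f t)) (‖S‖ * K)
      (by
        intro t ht
        have h1 := ((S.restrictScalars ℝ).hasFDerivAt (x := x t)).comp_hasDerivAt t (hx t ht)
        have h2 : S (-(T (x t)) + f t) = -(T (S (x t))) + S (f t) := by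
          simp only [hSapp, map_add, map_neg, map_sub, map_smul, smul_add, smul_neg]
          abel
        rw [← h2]
        exact h1)
      (by
        intro t ht
        calc ‖S (f t)‖ ≤ ‖S‖ * ‖f t‖ := S.le_opNorm _
          _ ≤ ‖S‖ * (K * Real.exp (-α * t)) := by gcongr; exact hf t ht
          _ = _ := by ring)
      (by
        intro t ht
        have h1 := h t ht
        rw [Multiset.map_cons, Multiset.prod_cons, mul_comm, map_mul, map_sub,
          Polynomial.aeval_X, Polynomial.aeval_C] at h1
        exact h1)
    have hfin := mode_decay μ α ((1 + C * ‖S‖) * (‖x 0‖ + K)) hμ x (fun t => f t - S (x t))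
      (by
        intro t ht
        have h2 : -(T (x t)) + f t = -(μ • x t) + (f t - S (x t)) := by
          rw [hSapp]; abel
        rw [← h2]
        exact hx t ht)
      (by
        intro t ht
        calc ‖f t - S (x t)‖ ≤ ‖f t‖ + ‖S (x t)‖ := norm_sub_le _ _
          _ ≤ K * Real.exp (-α * t) + C * (‖S (x 0)‖ + ‖S‖ * K) * Real.exp (-α * t) :=
            add_le_add (hf t ht) (hy t ht)
          _ ≤ (‖x 0‖ + K) * Real.exp (-α * t)
              + C * (‖S‖ * ‖x 0‖ + ‖S‖ * K) * Real.exp (-α * t) := by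
            gcongr
            · exact le_add_of_nonneg_left (norm_nonneg _)
            · exact S.le_opNorm _
          _ = _ := by ring)
      t ht
    refine hfin.trans ?_
    gcongr
    have : (1 + (1 + C * ‖S‖) / (μ.re - α)) * (‖x 0‖ + K)
        = (‖x 0‖ + (1 + C * ‖S‖) * (‖x 0‖ + K) / (μ.re - α)) + K := by
      ring
    linarith

/-- A rate strictly below finitely many positive thresholds. -/
theorem exists_common_rate (c : ℝ) (hc : 0 < c) (s : Multiset ℂ) (hs : ∀ μ ∈ s, 0 < μ.re) :
    ∃ α : ℝ, 0 < α ∧ α ≤ c ∧ ∀ μ ∈ s, α < μ.re := by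
  induction s using Multiset.induction_on with
  | empty => exact ⟨c, hc, le_rfl, by simp⟩
  | cons μ s ih =>
    obtain ⟨α, h1, h2, h3⟩ := ih fun ν hν => hs ν (Multiset.mem_cons_of_mem hν)
    have hμ := hs μ (Multiset.mem_cons_self μ s)
    refine ⟨min α (μ.re / 2), by positivity, (min_le_left _ _).trans h2, fun ν hν => ?_⟩
    rcases Multiset.mem_cons.1 hν with rfl | hν
    · exact (min_le_right _ _).trans_lt (by linarith)
    · exact (min_le_left _ _).trans_lt (h3 ν hν)

/-- If every complex eigenvalue of `A` has positive real part, then there is a rate `α`, as small as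
desired, such that `x' = -A x + f` turns an input of rate `α` into a state of rate `α`. By
Cayley-Hamilton the characteristic polynomial, which splits over `ℂ`, annihilates `A`. -/
theorem hurwitz_decay {m : ℕ} (A : Matrix (Fin m) (Fin m) ℂ)
    (hA : ∀ μ ∈ spectrum ℂ A, 0 < μ.re) (c : ℝ) (hc : 0 < c) :
    ∃ α : ℝ, 0 < α ∧ α ≤ c ∧ ∃ C : ℝ, 0 ≤ C ∧ ∀ (x f : ℝ → Fin m → ℂ) (K : ℝ),
      (∀ t : ℝ, 0 ≤ t → HasDerivAt x (-(A.mulVec (x t)) + f t) t) →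
      (∀ t : ℝ, 0 ≤ t → ‖f t‖ ≤ K * Real.exp (-α * t)) →
      ∀ t : ℝ, 0 ≤ t → ‖x t‖ ≤ C * (‖x 0‖ + K) * Real.exp (-α * t) := by
  set e : Matrix (Fin m) (Fin m) ℂ ≃ₐ[ℂ] ((Fin m → ℂ) →L[ℂ] (Fin m → ℂ)) :=
    Matrix.toLinAlgEquiv'.trans (Module.End.toContinuousLinearMap (Fin m → ℂ)) with he
  obtain ⟨α, h1, h2, h3⟩ := exists_common_rate c hc A.charpoly.roots (by
    intro μ hμ
    exact hA μ (Matrix.mem_spectrum_iff_isRoot_charpoly.2 (Polynomial.isRoot_of_mem_roots hμ)))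
  obtain ⟨C, hC, h⟩ := decay_of_annihilating_roots (e A) α A.charpoly.roots h3
  refine ⟨α, h1, h2, C, hC, fun x f K hx hf => h x f K hx hf fun t _ => ?_⟩
  have hcomm : Polynomial.aeval (e A) A.charpoly = e (Polynomial.aeval A A.charpoly) :=
    Polynomial.aeval_algHom_apply e.toAlgHom A A.charpoly
  rw [← (IsAlgClosed.splits A.charpoly).eq_prod_roots_of_monic A.charpoly_monic,
    hcomm, Matrix.aeval_self_charpoly]
  simp

/-- Coercivity of the Lyapunov dissipation, in coordinates `q₁ = (u, v)`, `q₂ = (p, w)`: two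
non-parallel lines of sight determine a vector, with determinant `sin (θ₁ - θ₂)`. -/
theorem dissipation_coercive (θ₁ θ₂ u v p w : ℝ) :
    Real.sin (θ₁ - θ₂) ^ 2 * (u ^ 2 + v ^ 2) ≤
      4 * ((u - p) ^ 2 + (v - w) ^ 2 + (Real.sin θ₁ * u - Real.cos θ₁ * v) ^ 2
        + (Real.sin θ₂ * p - Real.cos θ₂ * w) ^ 2) := by
  rw [Real.sin_sub]
  have hc₁ := Real.sin_sq_add_cos_sq θ₁
  have hc₂ := Real.sin_sq_add_cos_sq θ₂
  set s := Real.sin θ₁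
  set c := Real.cos θ₁
  set s' := Real.sin θ₂
  set c' := Real.cos θ₂
  set a := s * u - c * v with ha
  set b := s' * u - c' * v with hb
  set b' := s' * p - c' * w with hb'
  have h1 : (s * c' - c * s') ^ 2 * (u ^ 2 + v ^ 2)
      = (c' * a - c * b) ^ 2 + (s' * a - s * b) ^ 2 := by
    rw [ha, hb]; ring
  have h2 : (c' * a - c * b) ^ 2 + (s' * a - s * b) ^ 2 ≤ 2 * (a ^ 2 + b ^ 2) := by
    have : 2 * (a ^ 2 + b ^ 2) - ((c' * a - c * b) ^ 2 + (s' * a - s * b) ^ 2)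
        = (c' * a + c * b) ^ 2 + (s' * a + s * b) ^ 2 := by
      linear_combination (-2 * b ^ 2) * hc₁ - 2 * a ^ 2 * hc₂
    nlinarith [sq_nonneg (c' * a + c * b), sq_nonneg (s' * a + s * b)]
  have h3 : (b - b') ^ 2 ≤ (u - p) ^ 2 + (v - w) ^ 2 := by
    have : (u - p) ^ 2 + (v - w) ^ 2 - (b - b') ^ 2
        = (c' * (u - p) + s' * (v - w)) ^ 2 := by
      rw [hb, hb']
      linear_combination (-(u - p) ^ 2 - (v - w) ^ 2) * hc₂
    nlinarith [sq_nonneg (c' * (u - p) + s' * (v - w))]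
  nlinarith [sq_nonneg (b - 2 * b'), sq_nonneg (a)]

/-- `M(θ)` is the orthogonal projection onto the line spanned by `(sin θ, -cos θ)`. -/
theorem projMat_mulVec (θ : ℝ) (q : Fin 2 → ℝ) : (projMat θ).mulVec q =
    ![Real.sin θ * (Real.sin θ * q 0 - Real.cos θ * q 1),
      -(Real.cos θ * (Real.sin θ * q 0 - Real.cos θ * q 1))] := by
  have h := Real.sin_sq_add_cos_sq θ
  ext i
  fin_cases i
  · simp [projMat, bearing, Matrix.mulVec, dotProduct, Fin.sum_univ_two]
    linear_combination (-q 0) * h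
  · simp [projMat, bearing, Matrix.mulVec, dotProduct, Fin.sum_univ_two]
    linear_combination (-q 1) * h

theorem sq_norm_le_coords (q : Fin 2 → ℝ) : ‖q‖ ^ 2 ≤ q 0 ^ 2 + q 1 ^ 2 := by
  have h : ‖q‖ ≤ Real.sqrt (q 0 ^ 2 + q 1 ^ 2) := by
    refine (pi_norm_le_iff_of_nonneg (Real.sqrt_nonneg _)).2 fun i => ?_
    rw [Real.norm_eq_abs]
    apply Real.abs_le_sqrt
    fin_cases i
    · exact le_add_of_nonneg_right (sq_nonneg (q 1))
    · exact le_add_of_nonneg_left (sq_nonneg (q 0))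
  calc ‖q‖ ^ 2 ≤ Real.sqrt (q 0 ^ 2 + q 1 ^ 2) ^ 2 := by gcongr
    _ = _ := Real.sq_sqrt (by positivity)

theorem coords_le_sq_norm (q : Fin 2 → ℝ) : q 0 ^ 2 + q 1 ^ 2 ≤ 2 * ‖q‖ ^ 2 := by
  have h (i : Fin 2) : q i ^ 2 ≤ ‖q‖ ^ 2 := by
    rw [← sq_abs (q i), ← Real.norm_eq_abs]
    gcongr
    exact norm_le_pi_norm q i
  linarith [h 0, h 1]

/-- Exponential stability of the two sensing agents, from the Lyapunov function
`k₂₁ |q₁|² + k₁₂ |q₂|²`. -/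
theorem sensing_decay (k₁₂ k₂₁ θ₁ θ₂ : ℝ) (hk₁₂ : 0 < k₁₂) (hk₂₁ : 0 < k₂₁)
    (hθ : Real.sin (θ₁ - θ₂) ≠ 0) (q₁ q₂ : ℝ → Fin 2 → ℝ)
    (hq₁ : ∀ t : ℝ, 0 ≤ t →
      HasDerivAt q₁ (-(k₁₂ • (q₁ t - q₂ t)) - (projMat θ₁).mulVec (q₁ t)) t)
    (hq₂ : ∀ t : ℝ, 0 ≤ t →
      HasDerivAt q₂ (-(k₂₁ • (q₂ t - q₁ t)) - (projMat θ₂).mulVec (q₂ t)) t) :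
    ∃ C : ℝ, 0 ≤ C ∧ ∃ c : ℝ, 0 < c ∧ ∀ t : ℝ, 0 ≤ t →
      ‖q₁ t‖ ≤ C * Real.exp (-c * t) * (‖q₁ 0‖ + ‖q₂ 0‖) ∧
      ‖q₂ t‖ ≤ C * Real.exp (-c * t) * (‖q₁ 0‖ + ‖q₂ 0‖) := by
  set V : ℝ → ℝ := fun t => k₂₁ * (q₁ t 0 ^ 2 + q₁ t 1 ^ 2) + k₁₂ * (q₂ t 0 ^ 2 + q₂ t 1 ^ 2)
    with hV
  set D : ℝ → ℝ := fun t => (q₁ t 0 - q₂ t 0) ^ 2 + (q₁ t 1 - q₂ t 1) ^ 2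
      + (Real.sin θ₁ * q₁ t 0 - Real.cos θ₁ * q₁ t 1) ^ 2
      + (Real.sin θ₂ * q₂ t 0 - Real.cos θ₂ * q₂ t 1) ^ 2 with hD
  obtain ⟨κ, hκ, hκ₁, hκ₂, hκ₃⟩ : ∃ κ : ℝ, 0 < κ ∧ κ ≤ k₁₂ ∧ κ ≤ k₂₁ ∧ κ ≤ k₁₂ * k₂₁ :=
    ⟨min k₁₂ (min k₂₁ (k₁₂ * k₂₁)), by positivity, min_le_left _ _,
      (min_le_right _ _).trans (min_le_left _ _), (min_le_right _ _).trans (min_le_right _ _)⟩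
  set σ := Real.sin (θ₁ - θ₂) ^ 2 with hσ
  have hσ0 : 0 < σ := by positivity
  have hks : 0 < k₁₂ + k₂₁ := by positivity
  -- The rate `2c`: dissipation is at least `2κD`, while `σV ≤ 4(k₁₂ + k₂₁)D`.
  obtain ⟨c, hc, hcσ⟩ : ∃ c : ℝ, 0 < c ∧ 4 * (k₁₂ + k₂₁) * c = κ * σ :=
    ⟨κ * σ / (4 * (k₁₂ + k₂₁)), by positivity, by field_simp⟩
  have hcoer (t : ℝ) : σ * V t ≤ 4 * (k₁₂ + k₂₁) * D t := by
    have h1 := dissipation_coercive θ₁ θ₂ (q₁ t 0) (q₁ t 1) (q₂ t 0) (q₂ t 1)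
    have h2 := dissipation_coercive θ₂ θ₁ (q₂ t 0) (q₂ t 1) (q₁ t 0) (q₁ t 1)
    have h3 : Real.sin (θ₂ - θ₁) ^ 2 = σ := by
      rw [hσ, ← neg_sub θ₁ θ₂, Real.sin_neg, neg_sq]
    rw [h3] at h2
    rw [← hσ] at h1
    have h1' := mul_le_mul_of_nonneg_left h1 hk₂₁.le
    have h2' := mul_le_mul_of_nonneg_left h2 hk₁₂.le
    simp only [hV, hD]
    linarith
  have hdiss (t : ℝ) : 2 * c * V t ≤ 2 * κ * D t := by
    have h1 := mul_le_mul_of_nonneg_left (hcoer t) hκ.le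
    have h2 : 4 * (k₁₂ + k₂₁) * (c * V t) ≤ 4 * (k₁₂ + k₂₁) * (κ * D t) := by
      calc 4 * (k₁₂ + k₂₁) * (c * V t) = κ * (σ * V t) := by
            rw [← mul_assoc, hcσ, mul_assoc]
        _ ≤ _ := h1
        _ = _ := by ring
    have := le_of_mul_le_mul_left h2 (by positivity)
    linarith
  have hVd (t : ℝ) (ht : 0 ≤ t) : ∃ d : ℝ, HasDerivAt V d t ∧ d ≤ -(2 * κ * D t) := by
    have h1 := hasDerivAt_pi.1 (hq₁ t ht)
    have h2 := hasDerivAt_pi.1 (hq₂ t ht)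
    refine ⟨_, ((((h1 0).pow 2).add ((h1 1).pow 2)).const_mul k₂₁).add
      ((((h2 0).pow 2).add ((h2 1).pow 2)).const_mul k₁₂), ?_⟩
    have e1 := mul_nonneg (sub_nonneg.2 hκ₂)
      (sq_nonneg (Real.sin θ₁ * q₁ t 0 - Real.cos θ₁ * q₁ t 1))
    have e2 := mul_nonneg (sub_nonneg.2 hκ₁)
      (sq_nonneg (Real.sin θ₂ * q₂ t 0 - Real.cos θ₂ * q₂ t 1))
    have e3 := mul_nonneg (sub_nonneg.2 hκ₃)
      (add_nonneg (sq_nonneg (q₁ t 0 - q₂ t 0)) (sq_nonneg (q₁ t 1 - q₂ t 1)))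
    simp only [projMat_mulVec, Pi.sub_apply, Pi.neg_apply, Pi.smul_apply, smul_eq_mul,
      Matrix.cons_val_zero, Matrix.cons_val_one, hD]
    norm_num
    linarith
  have hW (t : ℝ) (ht : 0 ≤ t) :
      ∃ d : ℝ, HasDerivAt (fun t => Real.exp (2 * c * t) * V t) d t ∧ d ≤ 0 := by
    obtain ⟨d, hd, hd'⟩ := hVd t ht
    have h1 : HasDerivAt (fun s : ℝ => 2 * c * s) (2 * c * 1) t :=
      (hasDerivAt_id t).const_mul (2 * c)
    refine ⟨_, h1.exp.mul hd, ?_⟩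
    have h2 : 2 * c * V t + d ≤ 0 := by linarith [hdiss t]
    calc _ = Real.exp (2 * c * t) * (2 * c * V t + d) := by ring
      _ ≤ 0 := mul_nonpos_of_nonneg_of_nonpos (Real.exp_pos _).le h2
  have hanti : AntitoneOn (fun t => Real.exp (2 * c * t) * V t) (Set.Ici 0) := by
    refine antitoneOn_of_deriv_nonpos (convex_Ici 0) ?_ ?_ ?_
    · intro t ht
      obtain ⟨d, hd, -⟩ := hW t ht
      exact hd.continuousAt.continuousWithinAt
    · intro t ht
      rw [interior_Ici] at ht
      obtain ⟨d, hd, -⟩ := hW t (le_of_lt ht)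
      exact hd.differentiableAt.differentiableWithinAt
    · intro t ht
      rw [interior_Ici] at ht
      obtain ⟨d, hd, hd'⟩ := hW t (le_of_lt ht)
      rwa [hd.deriv]
  set S := ‖q₁ 0‖ + ‖q₂ 0‖ with hS
  have hS0 : 0 ≤ S := by positivity
  have hV0 : V 0 ≤ 2 * (k₁₂ + k₂₁) * S ^ 2 := by
    have h1 := coords_le_sq_norm (q₁ 0)
    have h2 := coords_le_sq_norm (q₂ 0)
    have n1 := norm_nonneg (q₁ 0)
    have n2 := norm_nonneg (q₂ 0)
    have h3 : ‖q₁ 0‖ ^ 2 ≤ S ^ 2 := by gcongr; linarith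
    have h4 : ‖q₂ 0‖ ^ 2 ≤ S ^ 2 := by gcongr; linarith
    have h5 := mul_le_mul_of_nonneg_left (h1.trans (mul_le_mul_of_nonneg_left h3 zero_le_two))
      hk₂₁.le
    have h6 := mul_le_mul_of_nonneg_left (h2.trans (mul_le_mul_of_nonneg_left h4 zero_le_two))
      hk₁₂.le
    simp only [hV]
    linarith
  refine ⟨Real.sqrt (2 * (k₁₂ + k₂₁) / κ), Real.sqrt_nonneg _, c, hc, fun t ht => ?_⟩
  have hVt : V t ≤ 2 * (k₁₂ + k₂₁) * (Real.exp (-c * t) * S) ^ 2 := by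
    have h1 := hanti Set.self_mem_Ici (Set.mem_Ici.2 ht) ht
    simp only [mul_zero, Real.exp_zero, one_mul] at h1
    have h2 : Real.exp (-c * t) ^ 2 * Real.exp (2 * c * t) = 1 := by
      rw [← Real.exp_nat_mul, ← Real.exp_add]
      simp
      ring
    calc V t = Real.exp (-c * t) ^ 2 * (Real.exp (2 * c * t) * V t) := by
          rw [← mul_assoc, h2, one_mul]
      _ ≤ Real.exp (-c * t) ^ 2 * (2 * (k₁₂ + k₂₁) * S ^ 2) := by
          exact mul_le_mul_of_nonneg_left (h1.trans hV0) (by positivity)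
      _ = _ := by ring
  have hfin (q : Fin 2 → ℝ) (hq : κ * (q 0 ^ 2 + q 1 ^ 2) ≤ V t) :
      ‖q‖ ≤ Real.sqrt (2 * (k₁₂ + k₂₁) / κ) * Real.exp (-c * t) * S := by
    refine le_of_sq_le_sq ?_ (by positivity)
    have h1 := (mul_le_mul_of_nonneg_left (sq_norm_le_coords q) hκ.le).trans (hq.trans hVt)
    rw [mul_assoc, mul_pow, Real.sq_sqrt (by positivity), div_mul_eq_mul_div, le_div_iff₀ hκ]
    linarith
  have p1 : 0 ≤ q₁ t 0 ^ 2 + q₁ t 1 ^ 2 := by positivity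
  have p2 : 0 ≤ q₂ t 0 ^ 2 + q₂ t 1 ^ 2 := by positivity
  refine ⟨hfin _ ?_, hfin _ ?_⟩
  · simp only [hV]
    linarith [mul_le_mul_of_nonneg_right hκ₂ p1, mul_nonneg hk₁₂.le p2]
  · simp only [hV]
    linarith [mul_le_mul_of_nonneg_right hκ₁ p2, mul_nonneg hk₂₁.le p1]

theorem all_estimation_errors_exp_converge
    (k₁₂ k₂₁ θ₁ θ₂ : ℝ) (hk₁₂ : 0 < k₁₂) (hk₂₁ : 0 < k₂₁)
    (hθ : Real.sin (θ₁ - θ₂) ≠ 0)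
    (q₁ q₂ : ℝ → Fin 2 → ℝ)
    (hq₁ : ∀ t : ℝ, 0 ≤ t →
      HasDerivAt q₁ (-(k₁₂ • (q₁ t - q₂ t)) - (projMat θ₁).mulVec (q₁ t)) t)
    (hq₂ : ∀ t : ℝ, 0 ≤ t →
      HasDerivAt q₂ (-(k₂₁ • (q₂ t - q₁ t)) - (projMat θ₂).mulVec (q₂ t)) t)
    (m : ℕ) (hm : 1 ≤ m)
    (A : Matrix (Fin m) (Fin m) ℝ)
    (hA : ∀ μ ∈ spectrum ℂ (A.map (Complex.ofReal ·)), 0 < μ.re)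
    (Bf Be : Fin m → ℝ)
    (qs : ℝ → Fin m × Fin 2 → ℝ)
    (hqs : ∀ t : ℝ, 0 ≤ t →
      HasDerivAt qs
        (-(A ⊗ₖ (1 : Matrix (Fin 2) (Fin 2) ℝ)).mulVec (qs t)
          + (fun p : Fin m × Fin 2 => Bf p.1 * q₁ t p.2)
          - (fun p : Fin m × Fin 2 => Be p.1 * (q₁ t p.2 - q₂ t p.2))) t) :
    ∃ C > (0 : ℝ), ∃ α > (0 : ℝ), ∀ t : ℝ, 0 ≤ t →
      ‖q₁ t‖ + ‖q₂ t‖ + ‖qs t‖ ≤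
        C * Real.exp (-α * t) * (‖q₁ 0‖ + ‖q₂ 0‖ + ‖qs 0‖) := by

  obtain ⟨C₁, hC₁, c, hc, hsens⟩ := sensing_decay k₁₂ k₂₁ θ₁ θ₂ hk₁₂ hk₂₁ hθ q₁ q₂ hq₁ hq₂
  obtain ⟨α, hα, hαc, C₂, hC₂, hcons⟩ :=
    hurwitz_decay (A.map (Complex.ofReal ·)) hA c hc
  set S := ‖q₁ 0‖ + ‖q₂ 0‖ with hS
  have hS0 : 0 ≤ S := by positivity
  have hexp (t : ℝ) (ht : 0 ≤ t) : C₁ * Real.exp (-c * t) * S ≤ C₁ * S * Real.exp (-α * t) := by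
    have h1 : Real.exp (-c * t) ≤ Real.exp (-α * t) := by
      apply Real.exp_le_exp.2
      linarith [mul_le_mul_of_nonneg_right hαc ht]
    calc _ = C₁ * S * Real.exp (-c * t) := by ring
      _ ≤ _ := by gcongr
  have hb₁ (t : ℝ) (ht : 0 ≤ t) := (hsens t ht).1.trans (hexp t ht)
  have hb₂ (t : ℝ) (ht : 0 ≤ t) := (hsens t ht).2.trans (hexp t ht)
  set b := ‖Bf‖ + 2 * ‖Be‖ with hb
  have hb0 : 0 ≤ b := by positivity
  -- `A ⊗ I₂` acts separately on the two spatial coordinates, so each one is an `m`-dimensional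
  -- system, viewed over `ℂ`.
  have hcoord (j : Fin 2) (t : ℝ) (ht : 0 ≤ t) :
      ‖(fun i => (qs t (i, j) : ℂ) : Fin m → ℂ)‖ ≤
        C₂ * (‖qs 0‖ + b * (C₁ * S)) * Real.exp (-α * t) := by
    refine (hcons (fun t i => (qs t (i, j) : ℂ))
      (fun t i => ((Bf i * q₁ t j - Be i * (q₁ t j - q₂ t j) : ℝ) : ℂ))
      (b * (C₁ * S)) ?_ ?_ t ht).trans ?_
    · intro t ht
      refine hasDerivAt_pi.2 fun i => ?_
      have h1 := (hasDerivAt_pi.1 (hqs t ht) (i, j)).ofReal_comp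
      refine h1.congr_deriv ?_
      simp [Matrix.mulVec, dotProduct, Fintype.sum_prod_type, Matrix.kroneckerMap_apply,
        Matrix.one_apply]
      ring
    · intro t ht
      have hq₁j := (norm_le_pi_norm (q₁ t) j).trans (hb₁ t ht)
      have hq₂j := (norm_le_pi_norm (q₂ t) j).trans (hb₂ t ht)
      have hR : 0 ≤ C₁ * S * Real.exp (-α * t) := by positivity
      refine (pi_norm_le_iff_of_nonneg (by positivity)).2 fun i => ?_
      rw [Complex.norm_real]
      calc ‖Bf i * q₁ t j - Be i * (q₁ t j - q₂ t j)‖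
          ≤ ‖Bf i‖ * ‖q₁ t j‖ + ‖Be i‖ * (‖q₁ t j‖ + ‖q₂ t j‖) := by
            refine (norm_sub_le _ _).trans ?_
            rw [norm_mul, norm_mul]
            gcongr
            exact norm_sub_le _ _
        _ ≤ ‖Bf‖ * (C₁ * S * Real.exp (-α * t)) + ‖Be‖ *
              (C₁ * S * Real.exp (-α * t) + C₁ * S * Real.exp (-α * t)) := by
            gcongr
            · exact norm_le_pi_norm Bf i
            · exact norm_le_pi_norm Be i
        _ = _ := by rw [hb]; ring
    · gcongr
      refine (pi_norm_le_iff_of_nonneg (norm_nonneg _)).2 fun i => ?_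
      rw [Complex.norm_real]
      exact norm_le_pi_norm (qs 0) (i, j)
  have hb₃ (t : ℝ) (ht : 0 ≤ t) :
      ‖qs t‖ ≤ C₂ * (‖qs 0‖ + b * (C₁ * S)) * Real.exp (-α * t) := by
    refine (pi_norm_le_iff_of_nonneg (by positivity)).2 fun p => ?_
    have h1 := (norm_le_pi_norm (fun i => (qs t (i, p.2) : ℂ) : Fin m → ℂ) p.1).trans
      (hcoord p.2 t ht)
    rwa [Complex.norm_real] at h1
  refine ⟨2 * C₁ + C₂ * (1 + b * C₁) + 1, by positivity, α, hα, fun t ht => ?_⟩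
  have hQ := norm_nonneg (qs 0)
  calc ‖q₁ t‖ + ‖q₂ t‖ + ‖qs t‖
      ≤ (2 * C₁ * S + C₂ * (‖qs 0‖ + b * C₁ * S)) * Real.exp (-α * t) := by
        linarith [hb₁ t ht, hb₂ t ht, hb₃ t ht]
    _ ≤ ((2 * C₁ + C₂ * (1 + b * C₁) + 1) * (S + ‖qs 0‖)) * Real.exp (-α * t) := by
        gcongr
        have : 0 ≤ 2 * C₁ * ‖qs 0‖ + C₂ * S + C₂ * (b * C₁) * ‖qs 0‖ + (S + ‖qs 0‖) := by
          positivity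
        linarith
    _ = _ := by ring
end

section
/- Let c : ℝ → ℝ² be continuous and let h : ℝ → ℝ² be differentiable with h′(t) = (I₂ − h(t)h(t)ᵀ)·c(t) for all t ≥ 0 and ‖h(0)‖ = 1. Then ‖h(t)‖ = 1 for all t ≥ 0. -/
/-!
The defect `w = ‖h‖² - 1` satisfies the linear equation `w' = -2 ⟨h, c⟩ w` with `w 0 = 0`. On each
compact interval `[0, T]` the coefficient is continuous, hence bounded, so Grönwall's inequality
(`eq_zero_of_abs_deriv_le_mul_abs_self_of_eq_zero_right`) forces `w = 0` there.
-/

open Real Matrix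

theorem heading_dynamics_preserves_unit_norm
    (c : ℝ → Fin 2 → ℝ) (hc : Continuous c)
    (h : ℝ → Fin 2 → ℝ)
    (hode : ∀ t : ℝ, 0 ≤ t →
      HasDerivAt h
        ((1 - Matrix.vecMulVec (h t) (h t)).mulVec (c t)) t)
    (hinit : (h 0 0) ^ 2 + (h 0 1) ^ 2 = 1) :
    ∀ t : ℝ, 0 ≤ t → (h t 0) ^ 2 + (h t 1) ^ 2 = 1 := by
  intro T hT
  have hw : ∀ t : ℝ, 0 ≤ t → HasDerivAt (fun s => h s 0 ^ 2 + h s 1 ^ 2 - 1)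
      (-2 * (h t 0 * c t 0 + h t 1 * c t 1) * (h t 0 ^ 2 + h t 1 ^ 2 - 1)) t := by
    intro t ht
    have hd := hasDerivAt_pi.1 (hode t ht)
    refine ((((hd 0).pow 2).add ((hd 1).pow 2)).sub_const 1).congr_deriv ?_
    simp [Matrix.mulVec, dotProduct, Fin.sum_univ_two, Matrix.vecMulVec_apply]
    ring
  have hcont : ContinuousOn h (Set.Icc 0 T) :=
    fun t ht => (hode t ht.1).continuousAt.continuousWithinAt
  have hh : ∀ i, ContinuousOn (fun t => h t i) (Set.Icc 0 T) := continuousOn_pi.1 hcont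
  have hcc : ∀ i, ContinuousOn (fun t => c t i) (Set.Icc 0 T) :=
    continuousOn_pi.1 hc.continuousOn
  have hcoef : ContinuousOn (fun t => -2 * (h t 0 * c t 0 + h t 1 * c t 1)) (Set.Icc 0 T) :=
    continuousOn_const.mul (((hh 0).mul (hcc 0)).add ((hh 1).mul (hcc 1)))
  obtain ⟨K, hK⟩ := isCompact_Icc.exists_bound_of_continuousOn hcoef
  have hzero := eq_zero_of_abs_deriv_le_mul_abs_self_of_eq_zero_right
    (f := fun s => h s 0 ^ 2 + h s 1 ^ 2 - 1) (K := K) (a := 0) (b := T)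
    (fun t ht => (hw t ht.1).continuousAt.continuousWithinAt)
    (fun t ht => (hw t ht.1).hasDerivWithinAt)
    (by simp [hinit])
    (fun t ht => by
      rw [norm_mul]
      exact mul_le_mul_of_nonneg_right (hK t ⟨ht.1, ht.2.le⟩) (norm_nonneg _))
    T ⟨hT, le_rfl⟩
  exact sub_eq_zero.1 hzero
end

section
/- (Theorem 2, single-agent version with exact target knowledge) Let p, q₀ ∈ ℝ² with q₀ ≠ p, and set z = (q₀ − p)/‖q₀ − p‖. Let h : ℝ → ℝ² be differentiable with h′(t) = (I₂ − h(t)h(t)ᵀ)·(q₀ − p) for all t ≥ 0, ‖h(0)‖ = 1, and h(0) ≠ −z. Then h(t) → z as t → ∞, i.e., the agent's heading asymptotically points at the target. -/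
/-!
Write `w = q₀ - p`, `r = ‖w‖`, and decompose the heading through `s = ⟨h, w⟩` and
`k = det (w, h)`. The control law becomes the Riccati equation `s' = r² - s²` together with
`k' = -s k`. The integrating factor `D = exp (∫ s)` linearises both: `(D, s D)` solves
`D' = s D`, `(s D)' = r² D`, so `(s ± r) D = (s 0 ± r) exp (± r t)`, while `k D` is constant.
By the equality case of Cauchy–Schwarz, excluding the antipodal initial heading gives `s 0 > -r`;
hence `D → ∞`, which forces `s → r` and `k → 0`, that is, `h → w / r`.
The unit norm of `h` is needed only at time `0`.
-/

open Real Matrix Filter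

/-- Euclidean norm of a vector in `ℝ²` represented as `Fin 2 → ℝ`. -/
noncomputable def enorm2 (v : Fin 2 → ℝ) : ℝ := Real.sqrt (v 0 ^ 2 + v 1 ^ 2)

/-- A real function with zero derivative on `[0, ∞)` is constant there. -/
lemma eq_init_of_hasDerivAt_zero {f : ℝ → ℝ} (hf : ∀ t, 0 ≤ t → HasDerivAt f 0 t)
    {t : ℝ} (ht : 0 ≤ t) : f t = f 0 :=
  constant_of_has_deriv_right_zero
    (fun u hu => (hf u hu.1).continuousAt.continuousWithinAt)
    (fun u hu => (hf u hu.1).hasDerivWithinAt) t ⟨ht, le_rfl⟩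

/-- An integrating factor `D = exp (∫ s)` for a function continuous on `[0, ∞)`. -/
lemma exists_integrating_factor {s : ℝ → ℝ} (hs : ∀ t, 0 ≤ t → ContinuousAt s t) :
    ∃ D : ℝ → ℝ, D 0 = 1 ∧ (∀ t, 0 < D t) ∧
      ∀ t, 0 ≤ t → HasDerivAt D (s t * D t) t := by
  -- `s` is only controlled on `[0, ∞)`, so it is extended by its value at `0`.
  have hc : Continuous fun t => s (max t 0) :=
    continuous_iff_continuousAt.2 fun t =>
      ContinuousAt.comp (f := fun t => max t 0) (hs _ (le_max_right t 0))
        (continuous_id.max continuous_const).continuousAt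
  refine ⟨fun t => Real.exp (∫ u in (0 : ℝ)..t, s (max u 0)), by simp,
    fun t => Real.exp_pos _, fun t ht => ?_⟩
  have h1 := (hc.integral_hasStrictDerivAt 0 t).hasDerivAt.exp
  simp only [max_eq_left ht] at h1
  rwa [mul_comm] at h1

/-- Scalar form of the dynamics: `s` and `k` are the components of the heading along the target
direction and orthogonal to it, both scaled by the distance `r`. -/
lemma riccati_tendsto {r : ℝ} (hr : 0 < r) {s k : ℝ → ℝ}
    (hs : ∀ t, 0 ≤ t → HasDerivAt s (r ^ 2 - s t ^ 2) t)
    (hk : ∀ t, 0 ≤ t → HasDerivAt k (-(s t * k t)) t) (h0 : 0 < s 0 + r) :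
    Tendsto s atTop (nhds r) ∧ Tendsto k atTop (nhds 0) := by
  obtain ⟨D, hD0, hDpos, hD⟩ := exists_integrating_factor fun t ht => (hs t ht).continuousAt
  have hE : ∀ c t : ℝ, HasDerivAt (fun t => Real.exp (c * t)) (Real.exp (c * t) * c) t :=
    fun c t => by simpa using ((hasDerivAt_id t).const_mul c).exp
  -- The pair `(D, s D)` solves a linear system with eigenvalues `c = r` and `c = -r`.
  have hlin : ∀ c : ℝ, c ^ 2 = r ^ 2 → ∀ t, 0 ≤ t →
      Real.exp (-c * t) * ((s t + c) * D t) = s 0 + c := by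
    intro c hc t ht
    have := eq_init_of_hasDerivAt_zero
      (f := fun t => Real.exp (-c * t) * ((s t + c) * D t)) (fun u hu => by
        refine ((hE (-c) u).mul (((hs u hu).add_const c).mul (hD u hu))).congr_deriv ?_
        simp only [Pi.mul_apply]
        linear_combination (-Real.exp (-c * u) * D u) * hc) ht
    simpa [hD0] using this
  have hkD : ∀ t, 0 ≤ t → k t * D t = k 0 := by
    intro t ht
    have := eq_init_of_hasDerivAt_zero (f := fun t => k t * D t) (fun u hu => by
        refine ((hk u hu).mul (hD u hu)).congr_deriv ?_
        ring) ht
    simpa [hD0] using this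
  have hplus : ∀ t, 0 ≤ t → (s t + r) * D t = (s 0 + r) * Real.exp (r * t) := by
    intro t ht
    rw [← hlin r rfl t ht, neg_mul, Real.exp_neg]
    field_simp
  have hminus : ∀ t, 0 ≤ t → (s t - r) * D t = (s 0 - r) * Real.exp (-(r * t)) := by
    intro t ht
    have := hlin (-r) (by ring) t ht
    rw [neg_neg, ← sub_eq_add_neg, ← sub_eq_add_neg] at this
    rw [← this, Real.exp_neg]
    field_simp
  have hrt : Tendsto (fun t : ℝ => r * t) atTop atTop := tendsto_id.const_mul_atTop hr
  have hexp : Tendsto (fun t : ℝ => Real.exp (-(r * t))) atTop (nhds 0) :=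
    Real.tendsto_exp_neg_atTop_nhds_zero.comp hrt
  have hm : Tendsto (fun t => (s 0 - r) * Real.exp (-(r * t))) atTop (nhds 0) := by
    simpa using hexp.const_mul (s 0 - r)
  have hDtop : Tendsto D atTop atTop := by
    have h1 : Tendsto (fun t => (2 * r)⁻¹ *
        ((s 0 + r) * Real.exp (r * t) + -((s 0 - r) * Real.exp (-(r * t))))) atTop atTop :=
      (((Real.tendsto_exp_atTop.comp hrt).const_mul_atTop h0).atTop_add hm.neg).const_mul_atTop
        (by positivity)
    refine h1.congr' ?_
    filter_upwards [eventually_ge_atTop 0] with t ht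
    rw [← hplus t ht, ← hminus t ht]
    field_simp
    ring
  constructor
  · have h1 := (hm.div_atTop hDtop).const_add r
    rw [add_zero] at h1
    refine h1.congr' ?_
    filter_upwards [eventually_ge_atTop 0] with t ht
    rw [← hminus t ht, mul_div_cancel_right₀ _ (hDpos t).ne']
    ring
  · refine ((tendsto_const_nhds (x := k 0)).div_atTop hDtop).congr' ?_
    filter_upwards [eventually_ge_atTop 0] with t ht
    rw [← hkD t ht, mul_div_cancel_right₀ _ (hDpos t).ne']

theorem pointing_control_converges
    (p q₀ : Fin 2 → ℝ) (hpq : q₀ ≠ p)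
    (z : Fin 2 → ℝ) (hz : z = (enorm2 (q₀ - p))⁻¹ • (q₀ - p))
    (h : ℝ → Fin 2 → ℝ)
    (hode : ∀ t : ℝ, 0 ≤ t →
      HasDerivAt h ((1 - Matrix.vecMulVec (h t) (h t)).mulVec (q₀ - p)) t)
    (hinit : enorm2 (h 0) = 1) (hanti : h 0 ≠ -z) :
    Tendsto h atTop (nhds z) := by
  obtain ⟨a, ha⟩ : ∃ a, a = q₀ 0 - p 0 := ⟨_, rfl⟩
  obtain ⟨b, hb⟩ : ∃ b, b = q₀ 1 - p 1 := ⟨_, rfl⟩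
  obtain ⟨r, hrdef⟩ : ∃ r, r = enorm2 (q₀ - p) := ⟨_, rfl⟩
  have hr2 : r ^ 2 = a ^ 2 + b ^ 2 := by
    rw [hrdef, enorm2, Real.sq_sqrt (by positivity), ha, hb]
    rfl
  have hrne : r ≠ 0 := by
    intro h0
    apply hpq
    rw [h0] at hr2
    have ha0 : a = 0 := by nlinarith [sq_nonneg a, sq_nonneg b]
    have hb0 : b = 0 := by nlinarith [sq_nonneg a, sq_nonneg b]
    ext i
    fin_cases i
    · exact sub_eq_zero.1 (ha ▸ ha0)
    · exact sub_eq_zero.1 (hb ▸ hb0)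
  have hr : 0 < r := lt_of_le_of_ne (hrdef ▸ Real.sqrt_nonneg _) hrne.symm
  have hz0 : z 0 = a / r := by
    rw [hz, ← hrdef, ha, div_eq_inv_mul]
    rfl
  have hz1 : z 1 = b / r := by
    rw [hz, ← hrdef, hb, div_eq_inv_mul]
    rfl
  have hx : ∀ t, 0 ≤ t →
      HasDerivAt (fun t => h t 0) (a - (a * h t 0 + b * h t 1) * h t 0) t := by
    intro t ht
    refine (hasDerivAt_pi.1 (hode t ht) 0).congr_deriv ?_
    simp [Matrix.mulVec, dotProduct, Fin.sum_univ_two, Matrix.vecMulVec_apply,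
      ha, hb]
    ring
  have hy : ∀ t, 0 ≤ t →
      HasDerivAt (fun t => h t 1) (b - (a * h t 0 + b * h t 1) * h t 1) t := by
    intro t ht
    refine (hasDerivAt_pi.1 (hode t ht) 1).congr_deriv ?_
    simp [Matrix.mulVec, dotProduct, Fin.sum_univ_two, Matrix.vecMulVec_apply,
      ha, hb]
    ring
  have hn : h 0 0 ^ 2 + h 0 1 ^ 2 = 1 := by
    rw [enorm2, Real.sqrt_eq_one] at hinit
    exact hinit
  have hpos : 0 < a * h 0 0 + b * h 0 1 + r := by
    by_contra! hle
    apply hanti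
    -- `‖r h(0) + w‖² = 2 r (⟨h(0), w⟩ + r)`, so a nonpositive right side forces `h(0) = -w / r`.
    have key : (r * h 0 0 + a) ^ 2 + (r * h 0 1 + b) ^ 2
        = 2 * r * (a * h 0 0 + b * h 0 1 + r) := by
      linear_combination r ^ 2 * hn - hr2
    have hle' : 2 * r * (a * h 0 0 + b * h 0 1 + r) ≤ 0 :=
      mul_nonpos_of_nonneg_of_nonpos (by positivity) hle
    have e0 : r * h 0 0 + a = 0 := by
      nlinarith [sq_nonneg (r * h 0 0 + a), sq_nonneg (r * h 0 1 + b)]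
    have e1 : r * h 0 1 + b = 0 := by
      nlinarith [sq_nonneg (r * h 0 0 + a), sq_nonneg (r * h 0 1 + b)]
    ext i
    fin_cases i
    · change h 0 0 = -z 0
      rw [hz0]
      field_simp
      linarith
    · change h 0 1 = -z 1
      rw [hz1]
      field_simp
      linarith
  obtain ⟨hs, hk⟩ := riccati_tendsto hr (s := fun t => a * h t 0 + b * h t 1)
    (k := fun t => a * h t 1 - b * h t 0)
    (fun t ht => (((hx t ht).const_mul a).add ((hy t ht).const_mul b)).congr_deriv (by
      rw [hr2]
      ring))
    (fun t ht => (((hy t ht).const_mul a).sub ((hx t ht).const_mul b)).congr_deriv (by ring))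
    hpos
  refine tendsto_pi_nhds.2 fun i => ?_
  fin_cases i
  · have h1 := ((hs.const_mul a).sub (hk.const_mul b)).div_const (r ^ 2)
    have e : (a * r - b * 0) / r ^ 2 = z 0 := by
      rw [hz0]
      field_simp
      ring
    rw [e] at h1
    refine h1.congr fun t => ?_
    change _ = h t 0
    rw [div_eq_iff (by positivity), hr2]
    ring
  · have h1 := ((hs.const_mul b).add (hk.const_mul a)).div_const (r ^ 2)
    have e : (b * r + a * 0) / r ^ 2 = z 1 := by
      rw [hz1]
      field_simp
      ring
    rw [e] at h1
    refine h1.congr fun t => ?_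
    change _ = h t 1
    rw [div_eq_iff (by positivity), hr2]
    ring
end
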